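/- Let d_1 ≥ … ≥ d_m be real numbers and let w_1,…,w_m be a basis of ℝ^m. For each positive integer t let H(t) be the unique symmetric positive semidefinite t-th root of the symmetric positive semidefinite matrix Σ_{i=1}^m e^{t d_i} w_i w_iᵀ. Then for each j ∈ {1,…,m}, the j-th largest eigenvalue of H(t) converges to e^{d_j} as t → ∞ (t ranging over the positive integers). -/

import Mathlib

open Matrix Filter Topology

/-- The `j`-th largest eigenvalue of a symmetric (Hermitian) real matrix, `j` being
zero-based, so `j = 0` gives the largest eigenvalue.  For non-Hermitian matrices the
value is junk (`0`). -/
noncomputable def nthLargestEig {m : ℕ} (A : Matrix (Fin m) (Fin m) ℝ) (j : Fin m) : ℝ :=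
  if hA : A.IsHermitian then hA.eigenvalues (Tuple.sort hA.eigenvalues j.rev) else 0

/-!
The matrix `H t ^ t` has two expansions as a weighted sum of rank-one matrices: along an
orthonormal eigenbasis of `H t` with weights `λ_j(t) ^ t`, and along `w` with weights
`exp (t * d j)`. As in the Courant–Fischer argument, a dimension count gives a nonzero `x`
orthogonal to the vectors before position `j` in one expansion and to those after position `j` in
the other. Evaluating the quadratic form at `x` shows that the two `j`-th weights agree up to the
frame bounds of `w`, which do not depend on `t` and therefore disappear under the `t`-th root.
-/

open scoped InnerProductSpace

section FrameBounds

variable {𝕜 E ι : Type*} [RCLike 𝕜] [NormedAddCommGroup E] [InnerProductSpace 𝕜 E]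

theorem mem_orthogonal_span_range_iff {v : ι → E} {x : E} :
    x ∈ (Submodule.span 𝕜 (Set.range v))ᗮ ↔ ∀ i, ⟪v i, x⟫_𝕜 = 0 := by
  rw [← Submodule.span_singleton_le_iff_mem, ← Submodule.isOrtho_iff_le, Submodule.isOrtho_comm,
    Submodule.isOrtho_span]
  simp

variable [Fintype ι]

theorem exists_ne_zero_forall_inner_eq_zero (v : ι → E)
    (hv : Fintype.card ι < Module.finrank 𝕜 E) : ∃ x : E, x ≠ 0 ∧ ∀ i, ⟪v i, x⟫_𝕜 = 0 := by
  have hspan : Submodule.span 𝕜 (Set.range v) ≠ ⊤ := by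
    intro htop
    have hle : Module.finrank 𝕜 (Submodule.span 𝕜 (Set.range v)) ≤ Fintype.card ι :=
      finrank_range_le_card v
    rw [htop, finrank_top] at hle
    exact hle.not_gt hv
  have : FiniteDimensional 𝕜 (Submodule.span 𝕜 (Set.range v)) :=
    .span_of_finite 𝕜 (Set.finite_range v)
  obtain ⟨x, hx, hx0⟩ :=
    Submodule.exists_mem_ne_zero_of_ne_bot (mt Submodule.orthogonal_eq_bot_iff.1 hspan)
  exact ⟨x, hx0, mem_orthogonal_span_range_iff.1 hx⟩

theorem sum_norm_inner_sq_le (v : ι → E) (x : E) :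
    ∑ i, ‖⟪v i, x⟫_𝕜‖ ^ 2 ≤ (∑ i, ‖v i‖ ^ 2) * ‖x‖ ^ 2 := by
  simp only [Finset.sum_mul, ← mul_pow]
  gcongr
  exact norm_inner_le_norm _ _

theorem exists_pos_forall_mul_norm_sq_le_sum_norm_inner_sq {v : ι → E}
    (hv : Submodule.span 𝕜 (Set.range v) = ⊤) :
    ∃ c : ℝ, 0 < c ∧ ∀ x, c * ‖x‖ ^ 2 ≤ ∑ i, ‖⟪v i, x⟫_𝕜‖ ^ 2 := by
  have : FiniteDimensional 𝕜 E := ⟨hv ▸ Submodule.fg_span (Set.finite_range v)⟩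
  let L : E →ₗ[𝕜] EuclideanSpace 𝕜 ι :=
    (WithLp.linearEquiv 2 𝕜 (ι → 𝕜)).symm.toLinearMap ∘ₗ LinearMap.pi fun i => innerₛₗ 𝕜 (v i)
  have hL : ∀ x i, L x i = ⟪v i, x⟫_𝕜 := fun _ _ => rfl
  have hker : LinearMap.ker L = ⊥ := by
    refine LinearMap.ker_eq_bot'.2 fun x hx => ?_
    have hperp : x ∈ (Submodule.span 𝕜 (Set.range v))ᗮ :=
      mem_orthogonal_span_range_iff.2 fun i => by rw [← hL, hx, PiLp.zero_apply]
    simpa [hv] using hperp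
  obtain ⟨K, hK, hanti⟩ := L.exists_antilipschitzWith hker
  refine ⟨((K : ℝ) ^ 2)⁻¹, by positivity, fun x => ?_⟩
  have hle : ‖x‖ ≤ K * ‖L x‖ := hanti.le_mul_norm (map_zero L) x
  calc ((K : ℝ) ^ 2)⁻¹ * ‖x‖ ^ 2 ≤ ‖L x‖ ^ 2 := by
        rw [inv_mul_le_iff₀ (by positivity), ← mul_pow]
        gcongr
    _ = ∑ i, ‖⟪v i, x⟫_𝕜‖ ^ 2 := by simp only [EuclideanSpace.norm_sq_eq, hL]

theorem mul_le_mul_of_forall_sum_mul_norm_inner_sq_le [LinearOrder ι]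
    (hι : Fintype.card ι ≤ Module.finrank 𝕜 E) {a b : ι → ℝ} (ha : Antitone a) (hb : Antitone b)
    {j : ι} (haj : 0 ≤ a j) (hbj : 0 ≤ b j) {v w : ι → E}
    (hab : ∀ x, ∑ i, a i * ‖⟪v i, x⟫_𝕜‖ ^ 2 ≤ ∑ i, b i * ‖⟪w i, x⟫_𝕜‖ ^ 2)
    {c C : ℝ} (hc : ∀ x, c * ‖x‖ ^ 2 ≤ ∑ i, ‖⟪v i, x⟫_𝕜‖ ^ 2)
    (hC : ∀ x, ∑ i, ‖⟪w i, x⟫_𝕜‖ ^ 2 ≤ C * ‖x‖ ^ 2) :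
    c * a j ≤ C * b j := by
  obtain ⟨x, hx0, hx⟩ : ∃ x : E, x ≠ 0 ∧
      ∀ i : {i // i ≠ j}, ⟪if i < j then w i else v i, x⟫_𝕜 = 0 :=
    exists_ne_zero_forall_inner_eq_zero _
      ((Fintype.card_subtype_lt (x := j) (not_not.2 rfl)).trans_le hι)
  have hw : ∀ i < j, ⟪w i, x⟫_𝕜 = 0 := fun i hi => by simpa [hi] using hx ⟨i, hi.ne⟩
  have hv : ∀ i > j, ⟪v i, x⟫_𝕜 = 0 := fun i hi => by simpa [hi.not_gt] using hx ⟨i, hi.ne'⟩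
  have hlower : a j * ∑ i, ‖⟪v i, x⟫_𝕜‖ ^ 2 ≤ ∑ i, a i * ‖⟪v i, x⟫_𝕜‖ ^ 2 := by
    rw [Finset.mul_sum]
    refine Finset.sum_le_sum fun i _ => ?_
    rcases le_or_gt i j with hij | hij
    · exact mul_le_mul_of_nonneg_right (ha hij) (sq_nonneg _)
    · simp [hv i hij]
  have hupper : ∑ i, b i * ‖⟪w i, x⟫_𝕜‖ ^ 2 ≤ b j * ∑ i, ‖⟪w i, x⟫_𝕜‖ ^ 2 := by
    rw [Finset.mul_sum]
    refine Finset.sum_le_sum fun i _ => ?_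
    rcases le_or_gt j i with hij | hij
    · exact mul_le_mul_of_nonneg_right (hb hij) (sq_nonneg _)
    · simp [hw i hij]
  have hpos : 0 < ‖x‖ ^ 2 := by positivity
  refine le_of_mul_le_mul_right ?_ hpos
  calc c * a j * ‖x‖ ^ 2 = a j * (c * ‖x‖ ^ 2) := by ring
    _ ≤ a j * ∑ i, ‖⟪v i, x⟫_𝕜‖ ^ 2 := mul_le_mul_of_nonneg_left (hc x) haj
    _ ≤ ∑ i, a i * ‖⟪v i, x⟫_𝕜‖ ^ 2 := hlower
    _ ≤ ∑ i, b i * ‖⟪w i, x⟫_𝕜‖ ^ 2 := hab x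
    _ ≤ b j * ∑ i, ‖⟪w i, x⟫_𝕜‖ ^ 2 := hupper
    _ ≤ b j * (C * ‖x‖ ^ 2) := mul_le_mul_of_nonneg_left (hC x) hbj
    _ = C * b j * ‖x‖ ^ 2 := by ring

end FrameBounds

section QuadraticForms

variable {𝕜 E ι n : Type*} [RCLike 𝕜] [NormedAddCommGroup E] [InnerProductSpace 𝕜 E]
  [Fintype ι] [Fintype n] [DecidableEq n]

theorem inner_sum_smul_rankOne_apply_self (a : ι → 𝕜) (v : ι → E) (x : E) :
    ⟪x, ∑ i, a i • InnerProductSpace.rankOne 𝕜 (v i) (v i) x⟫_𝕜 =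
      ∑ i, a i * (‖⟪v i, x⟫_𝕜‖ : 𝕜) ^ 2 := by
  rw [inner_sum]
  refine Finset.sum_congr rfl fun i _ => ?_
  rw [inner_smul_right, InnerProductSpace.rankOne_apply, inner_smul_right,
    ← inner_conj_symm x, RCLike.mul_conj]

theorem inner_apply_self_eq_sum_of_apply_eq_smul (e : OrthonormalBasis ι 𝕜 E) {T : E →ₗ[𝕜] E}
    {μ : ι → 𝕜} (hT : ∀ i, T (e i) = μ i • e i) (x : E) :
    ⟪x, T x⟫_𝕜 = ∑ i, μ i * (‖⟪e i, x⟫_𝕜‖ : 𝕜) ^ 2 := by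
  have hTx : T x = ∑ i, μ i • InnerProductSpace.rankOne 𝕜 (e i) (e i) x := by
    conv_lhs => rw [← e.sum_repr' x, map_sum]
    refine Finset.sum_congr rfl fun i _ => ?_
    rw [map_smul, hT, smul_comm, InnerProductSpace.rankOne_apply]
  rw [hTx, inner_sum_smul_rankOne_apply_self]

theorem inner_toEuclideanLin_sum_smul_vecMulVec_apply_self (a : ι → 𝕜)
    (v : ι → EuclideanSpace 𝕜 n) (x : EuclideanSpace 𝕜 n) :
    ⟪x, toEuclideanLin (∑ i, a i • vecMulVec (v i) (star (v i))) x⟫_𝕜 =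
      ∑ i, a i * (‖⟪v i, x⟫_𝕜‖ : 𝕜) ^ 2 := by
  rw [← inner_sum_smul_rankOne_apply_self]
  simp [← InnerProductSpace.symm_toEuclideanLin_rankOne]

end QuadraticForms

section NthLargestEig

variable {m : ℕ} {A : Matrix (Fin m) (Fin m) ℝ}

theorem nthLargestEig_eq_eigenvalues (hA : A.IsHermitian) (j : Fin m) :
    nthLargestEig A j = hA.eigenvalues ((Fin.revPerm.trans (Tuple.sort hA.eigenvalues)) j) := by
  rw [nthLargestEig, dif_pos hA]
  rfl

theorem antitone_nthLargestEig (A : Matrix (Fin m) (Fin m) ℝ) : Antitone (nthLargestEig A) := by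
  intro i j hij
  unfold nthLargestEig
  split_ifs with hA
  · exact Tuple.monotone_sort hA.eigenvalues (Fin.rev_le_rev.2 hij)
  · exact le_rfl

theorem nthLargestEig_nonneg (hA : A.PosSemidef) (j : Fin m) : 0 ≤ nthLargestEig A j := by
  rw [nthLargestEig_eq_eigenvalues hA.isHermitian]
  exact hA.eigenvalues_nonneg _

theorem exists_orthonormalBasis_toEuclideanLin_apply_eq_nthLargestEig_smul (hA : A.IsHermitian) :
    ∃ e : OrthonormalBasis (Fin m) ℝ (EuclideanSpace ℝ (Fin m)),
      ∀ i, toEuclideanLin A (e i) = nthLargestEig A i • e i := by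
  refine ⟨hA.eigenvectorBasis.reindex (Fin.revPerm.trans (Tuple.sort hA.eigenvalues)).symm,
    fun i => WithLp.ofLp_injective 2 ?_⟩
  rw [OrthonormalBasis.reindex_apply, Equiv.symm_symm, nthLargestEig_eq_eigenvalues hA]
  exact hA.mulVec_eigenvectorBasis _

theorem exists_orthonormalBasis_inner_toEuclideanLin_pow_eq_sum (hA : A.IsHermitian) (t : ℕ) :
    ∃ e : OrthonormalBasis (Fin m) ℝ (EuclideanSpace ℝ (Fin m)), ∀ x,
      ⟪x, toEuclideanLin (A ^ t) x⟫_ℝ = ∑ i, nthLargestEig A i ^ t * ‖⟪e i, x⟫_ℝ‖ ^ 2 := by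
  obtain ⟨e, he⟩ := exists_orthonormalBasis_toEuclideanLin_apply_eq_nthLargestEig_smul hA
  refine ⟨e, inner_apply_self_eq_sum_of_apply_eq_smul e fun i => ?_⟩
  have hvec : Module.End.HasEigenvector (toEuclideanLin A) (nthLargestEig A i) (e i) :=
    ⟨Module.End.mem_eigenspace_iff.2 (he i), e.toBasis.ne_zero i⟩
  rw [toLpLin_pow, hvec.pow_apply]

theorem nthLargestEig_pow_mem_Icc (hA : A.PosSemidef) {t : ℕ} {b : Fin m → ℝ} (hb : Antitone b)
    {w : Fin m → EuclideanSpace ℝ (Fin m)}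
    (hAw : A ^ t = ∑ i, b i • vecMulVec (w i).ofLp (w i).ofLp)
    {c C : ℝ} (hc : ∀ x, c * ‖x‖ ^ 2 ≤ ∑ i, ‖⟪w i, x⟫_ℝ‖ ^ 2)
    (hC : ∀ x, ∑ i, ‖⟪w i, x⟫_ℝ‖ ^ 2 ≤ C * ‖x‖ ^ 2) {j : Fin m} (hbj : 0 ≤ b j) :
    nthLargestEig A j ^ t ∈ Set.Icc (c * b j) (C * b j) := by
  obtain ⟨e, he⟩ := exists_orthonormalBasis_inner_toEuclideanLin_pow_eq_sum hA.isHermitian t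
  have hform : ∀ x, ∑ i, nthLargestEig A i ^ t * ‖⟪e i, x⟫_ℝ‖ ^ 2 =
      ∑ i, b i * ‖⟪w i, x⟫_ℝ‖ ^ 2 := fun x => by
    rw [← he, hAw]
    exact inner_toEuclideanLin_sum_smul_vecMulVec_apply_self b w x
  have hparseval : ∀ x, ∑ i, ‖⟪e i, x⟫_ℝ‖ ^ 2 = 1 * ‖x‖ ^ 2 := fun x => by
    rw [e.sum_sq_norm_inner_right, one_mul]
  have hpow : Antitone fun i => nthLargestEig A i ^ t := fun i k hik =>
    pow_le_pow_left₀ (nthLargestEig_nonneg hA k) (antitone_nthLargestEig A hik) t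
  have hpowj : 0 ≤ nthLargestEig A j ^ t := pow_nonneg (nthLargestEig_nonneg hA j) t
  have hcard : Fintype.card (Fin m) ≤ Module.finrank ℝ (EuclideanSpace ℝ (Fin m)) := by simp
  constructor
  · simpa only [one_mul] using mul_le_mul_of_forall_sum_mul_norm_inner_sq_le hcard hb hpow hbj
      hpowj (fun x => (hform x).ge) hc fun x => (hparseval x).le
  · simpa only [one_mul] using mul_le_mul_of_forall_sum_mul_norm_inner_sq_le hcard hpow hb hpowj
      hbj (fun x => (hform x).le) (fun x => (hparseval x).ge) hC

end NthLargestEig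

section RootAsymptotics

theorem tendsto_const_rpow_inv_natCast {a : ℝ} (ha : a ≠ 0) :
    Tendsto (fun t : ℕ => a ^ (t : ℝ)⁻¹) atTop (𝓝 1) := by
  simpa only [Real.rpow_zero, Function.comp_def] using
    (Real.continuousAt_const_rpow ha).tendsto.comp (tendsto_inv_atTop_nhds_zero_nat (𝕜 := ℝ))

theorem tendsto_of_pow_mem_Icc_mul_pow {c C r : ℝ} (hc : 0 < c) (hC : 0 < C) (hr : 0 ≤ r)
    {u : ℕ → ℝ} (hu0 : ∀ᶠ t in atTop, 0 ≤ u t)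
    (hu : ∀ᶠ t in atTop, u t ^ t ∈ Set.Icc (c * r ^ t) (C * r ^ t)) :
    Tendsto u atTop (𝓝 r) := by
  have hlim : ∀ {a : ℝ}, 0 < a → Tendsto (fun t : ℕ => a ^ (t : ℝ)⁻¹ * r) atTop (𝓝 r) :=
    fun ha => by simpa only [one_mul] using (tendsto_const_rpow_inv_natCast ha.ne').mul_const r
  have hroot : ∀ {a : ℝ} {t : ℕ}, 0 < a → t ≠ 0 → (a ^ (t : ℝ)⁻¹ * r) ^ t = a * r ^ t :=
    fun ha ht => by rw [mul_pow, Real.rpow_inv_natCast_pow ha.le ht]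
  refine tendsto_of_tendsto_of_tendsto_of_le_of_le' (hlim hc) (hlim hC) ?_ ?_
  · filter_upwards [hu0, hu, eventually_ne_atTop 0] with t h0 ht ht0
    exact le_of_pow_le_pow_left₀ ht0 h0 ((hroot hc ht0).trans_le ht.1)
  · filter_upwards [hu, eventually_ne_atTop 0] with t ht ht0
    exact le_of_pow_le_pow_left₀ ht0 (by positivity) (ht.2.trans_eq (hroot hC ht0).symm)

end RootAsymptotics

/-- Let `d 0 ≥ … ≥ d (m-1)` be real numbers and `w 0, …, w (m-1)` a basis of
`ℝ^m`.  For each positive integer `t`, let `H t` be the unique symmetric positive semidefinite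
`t`-th root of `∑ i, exp (t * d i) • w i w iᵀ`.  Then for each `j`, the `j`-th largest
eigenvalue of `H t` converges to `exp (d j)` as `t → ∞`. -/
theorem stmt0 {m : ℕ} (d : Fin m → ℝ) (hd : Antitone d)
    (w : Fin m → EuclideanSpace ℝ (Fin m)) (hw : LinearIndependent ℝ w)
    (H : ℕ → Matrix (Fin m) (Fin m) ℝ)
    (hH : ∀ t : ℕ, 1 ≤ t → (H t).PosSemidef ∧
      (H t) ^ t =
        ∑ i, Real.exp ((t : ℝ) * d i) •
          Matrix.vecMulVec (WithLp.equiv 2 (Fin m → ℝ) (w i)) (WithLp.equiv 2 (Fin m → ℝ) (w i)))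
    (j : Fin m) :
    Tendsto (fun t : ℕ => nthLargestEig (H t) j) atTop (𝓝 (Real.exp (d j))) := by
  obtain ⟨c, hc0, hc⟩ := exists_pos_forall_mul_norm_sq_le_sum_norm_inner_sq (𝕜 := ℝ)
    (hw.span_eq_top_of_card_eq_finrank' (by simp))
  have hC0 : 0 < ∑ i, ‖w i‖ ^ 2 :=
    Finset.sum_pos (fun i _ => pow_pos (norm_pos_iff.2 (hw.ne_zero i)) 2) ⟨j, Finset.mem_univ j⟩
  refine tendsto_of_pow_mem_Icc_mul_pow hc0 hC0 (Real.exp_pos _).le ?_ ?_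
  · filter_upwards [eventually_ge_atTop 1] with t ht
    exact nthLargestEig_nonneg (hH t ht).1 j
  · filter_upwards [eventually_ge_atTop 1] with t ht
    obtain ⟨hpsd, hpow⟩ := hH t ht
    have hweights : Antitone fun i => Real.exp (t * d i) := fun i k hik =>
      Real.exp_le_exp.2 (mul_le_mul_of_nonneg_left (hd hik) t.cast_nonneg)
    rw [← Real.exp_nat_mul]
    exact nthLargestEig_pow_mem_Icc hpsd hweights hpow hc (sum_norm_inner_sq_le w)
      (Real.exp_pos _).le
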